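/- For every integer n > 2^14 = 16384, every positive integer N, and every n-linear form U : (ℂ^N)^n → ℂ, one has (∑_{i₁,…,iₙ=1}^N |U(e_{i₁},…,e_{iₙ})|^{2n/(n+1)})^{(n+1)/(2n)} ≤ 0.99137409768 · (n-1)^{0.304975} · ‖U‖. -/

import Mathlib

open Real

/-- The Bohnenblust--Hille quantity of an `n`-linear form on `ℓ_∞^N` over `ℂ`:
`(∑_{i₁,…,iₙ} |U(e_{i₁},…,e_{iₙ})|^{2n/(n+1)})^{(n+1)/(2n)}`. -/
noncomputable def BHcomplex (n N : ℕ)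
    (U : ContinuousMultilinearMap ℂ (fun _ : Fin n => (Fin N → ℂ)) ℂ) : ℝ :=
  (∑ i : Fin n → Fin N,
      ‖U (fun k => Pi.single (i k) (1 : ℂ))‖ ^ ((2 * n : ℝ) / (n + 1)))
    ^ ((n + 1 : ℝ) / (2 * n))

/-!
The best constant for `n + 1` variables exceeds the one for `n` variables by a factor of at most
`exp (0.27 / n)`; multiplying these factors gives `exp (0.27 * H_{n-1})`, a power of `n` up to
constants.

Blei's inequality, which is Hölder interpolation combined with the Loomis–Whitney inequality,
bounds the coefficients of an `(n + 1)`-linear form by the mixed sums that take an `ℓ²` norm in one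
variable. Inserting independent random phases in that variable, a Khinchine inequality with
exponent `2p`, `p = n / (n + 1)`, turns each mixed sum into an average over `n`-linear forms of norm
at most `‖U‖`.

For a normalised random sum with squared modulus `X`, convexity gives
`exp ((p - 1) * 𝔼 X log X) ≤ 𝔼 X ^ p`, so the Khinchine constant follows from
`𝔼 X log X ≤ 0.54`. Replacing `log` by a cubic majorant leaves only the moments of `X` of order at
most four, and for these fifth roots of unity behave like phases uniform on the circle, so a finite
probability space suffices.
-/

open Finset
open scoped NNReal BigOperators

theorem exp_mul_entropy_le_expect_rpow {Ω : Type*} [Fintype Ω] {X : Ω → ℝ}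
    (hX : ∀ ω, 0 ≤ X ω) (hmean : 𝔼 ω, X ω = 1) (p : ℝ) :
    exp ((p - 1) * 𝔼 ω, X ω * log (X ω)) ≤ 𝔼 ω, X ω ^ p := by
  set E := 𝔼 ω, X ω * log (X ω) with hE
  have tangent (ω : Ω) :
      exp ((p - 1) * E) * (X ω + (p - 1) * (X ω * log (X ω) - E * X ω)) ≤ X ω ^ p := by
    rcases (hX ω).eq_or_lt with h0 | hpos
    · simpa [← h0] using rpow_nonneg le_rfl p
    calc exp ((p - 1) * E) * (X ω + (p - 1) * (X ω * log (X ω) - E * X ω))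
        = X ω * exp ((p - 1) * E) * ((p - 1) * (log (X ω) - E) + 1) := by ring
      _ ≤ X ω * exp ((p - 1) * E) * exp ((p - 1) * (log (X ω) - E)) := by
        gcongr
        exact add_one_le_exp _
      _ = exp (log (X ω)) * exp ((p - 1) * E) * exp ((p - 1) * (log (X ω) - E)) := by
        rw [exp_log hpos]
      _ = X ω ^ p := by
        rw [rpow_def_of_pos hpos, ← exp_add, ← exp_add]
        ring_nf
  calc exp ((p - 1) * E)
      = 𝔼 ω, exp ((p - 1) * E) * (X ω + (p - 1) * (X ω * log (X ω) - E * X ω)) := by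
        rw [← mul_expect, expect_add_distrib, ← mul_expect, expect_sub_distrib, ← mul_expect,
          hmean, ← hE]
        ring
    _ ≤ 𝔼 ω, X ω ^ p := expect_le_expect fun ω _ => tangent ω

/-- A cubic majorant of the logarithm, chosen so that `logMajorant x - log x` has derivative
`5 / 46 * (x - 1) * (x - 2.3) * (x - 4) / x`, hence local minima at `1` and `4`. -/
noncomputable def logMajorant (x : ℝ) : ℝ :=
  -1.32 + 155 / 92 * x - 73 / 184 * x ^ 2 + 5 / 138 * x ^ 3

theorem hasDerivAt_logMajorant_sub_log {x : ℝ} (hx : 0 < x) :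
    HasDerivAt (fun x => logMajorant x - log x)
      (5 / 46 * ((x - 1) * (x - 2.3) * (x - 4)) / x) x := by
  have hcubic :
      HasDerivAt logMajorant (155 / 92 - 73 / 184 * (2 * x) + 5 / 138 * (3 * x ^ 2)) x := by
    have hlin := ((hasDerivAt_id x).const_mul (155 / 92 : ℝ)).const_add (-1.32 : ℝ)
    have hsq := (hasDerivAt_pow 2 x).const_mul (73 / 184 : ℝ)
    have hcube := (hasDerivAt_pow 3 x).const_mul (5 / 138 : ℝ)
    exact ((hlin.sub hsq).add hcube).congr_deriv (by norm_num)
  refine (hcubic.sub (hasDerivAt_log hx.ne')).congr_deriv ?_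
  field_simp
  ring

theorem log_one_le_logMajorant : log 1 ≤ logMajorant 1 := by
  norm_num [logMajorant]

theorem log_four_le_logMajorant : log 4 ≤ logMajorant 4 := by
  rw [show (4 : ℝ) = 2 ^ 2 by norm_num, log_pow]
  norm_num [logMajorant]
  linarith [log_two_lt_d9]

theorem isMinOn_logMajorant_sub_log_Ioc :
    IsMinOn (fun x => logMajorant x - log x) (Set.Ioc 0 2.3) 1 := by
  have hdiff {y : ℝ} (hy : 0 < y) : DifferentiableAt ℝ (fun x => logMajorant x - log x) y :=
    (hasDerivAt_logMajorant_sub_log hy).differentiableAt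
  refine isMinOn_Ioc_of_deriv (hdiff one_pos).continuousAt (hdiff (by norm_num)).continuousAt
    (fun y hy => (hdiff hy.1).differentiableWithinAt)
    (fun y hy => (hdiff (one_pos.trans hy.1)).differentiableWithinAt)
    (fun y ⟨h0, h1⟩ => ?_) (fun y ⟨h1, h2⟩ => ?_)
  · rw [(hasDerivAt_logMajorant_sub_log h0).deriv]
    refine div_nonpos_of_nonpos_of_nonneg (mul_nonpos_of_nonneg_of_nonpos (by norm_num) ?_) h0.le
    exact mul_nonpos_of_nonneg_of_nonpos
      (mul_nonneg_of_nonpos_of_nonpos (by linarith) (by linarith)) (by linarith)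
  · have h0 : 0 < y := one_pos.trans h1
    rw [(hasDerivAt_logMajorant_sub_log h0).deriv]
    refine div_nonneg (mul_nonneg (by norm_num) ?_) h0.le
    exact mul_nonneg_of_nonpos_of_nonpos
      (mul_nonpos_of_nonneg_of_nonpos (by linarith) (by linarith)) (by linarith)

theorem isMinOn_logMajorant_sub_log_Ici :
    IsMinOn (fun x => logMajorant x - log x) (Set.Ici 2.3) 4 := by
  have hdiff {y : ℝ} (hy : 0 < y) : DifferentiableAt ℝ (fun x => logMajorant x - log x) y :=
    (hasDerivAt_logMajorant_sub_log hy).differentiableAt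
  refine isMinOn_Ici_of_deriv (hdiff (by norm_num)).continuousAt
    (hdiff (by norm_num)).continuousAt
    (fun y hy => (hdiff (by linarith [hy.1])).differentiableWithinAt)
    (fun y hy => (hdiff (by linarith [hy.out])).differentiableWithinAt)
    (fun y ⟨h2, h4⟩ => ?_) (fun y (h4 : 4 < y) => ?_)
  · have h0 : 0 < y := by linarith
    rw [(hasDerivAt_logMajorant_sub_log h0).deriv]
    refine div_nonpos_of_nonpos_of_nonneg (mul_nonpos_of_nonneg_of_nonpos (by norm_num) ?_) h0.le
    exact mul_nonpos_of_nonneg_of_nonpos (mul_nonneg (by linarith) (by linarith)) (by linarith)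
  · have h0 : 0 < y := by linarith
    rw [(hasDerivAt_logMajorant_sub_log h0).deriv]
    refine div_nonneg (mul_nonneg (by norm_num) ?_) h0.le
    exact mul_nonneg (mul_nonneg (by linarith) (by linarith)) (by linarith)

theorem log_le_logMajorant {x : ℝ} (hx : 0 < x) : log x ≤ logMajorant x := by
  rw [← sub_nonneg]
  rcases le_total x 2.3 with hle | hge
  · exact (sub_nonneg.mpr log_one_le_logMajorant).trans
      (isMinOn_logMajorant_sub_log_Ioc ⟨hx, hle⟩)
  · exact (sub_nonneg.mpr log_four_le_logMajorant).trans (isMinOn_logMajorant_sub_log_Ici hge)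

section Moments

open ZMod

variable {r : ℕ} [NeZero r]

theorem expect_stdAddChar_pow_mul_conj_pow {k l : ℕ} (hk : k < r) (hl : l < r) :
    𝔼 j : ZMod r, stdAddChar j ^ k * starRingEnd ℂ (stdAddChar j ^ l) = if k = l then 1 else 0 := by
  have hterm (j : ZMod r) :
      stdAddChar j ^ k * starRingEnd ℂ (stdAddChar j ^ l) = stdAddChar (j * (k - l : ZMod r)) := by
    rw [mul_sub, AddChar.map_sub_eq_div, mul_comm j, mul_comm j, ← nsmul_eq_mul, ← nsmul_eq_mul,
      AddChar.map_nsmul_eq_pow, AddChar.map_nsmul_eq_pow, div_eq_mul_inv,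
      Complex.inv_eq_conj (by simp)]
  have hcast : (k - l : ZMod r) = 0 ↔ k = l := by
    rw [sub_eq_zero, ZMod.natCast_eq_natCast_iff', Nat.mod_eq_of_lt hk, Nat.mod_eq_of_lt hl]
  simp only [hterm, Fintype.expect_eq_sum_div_card,
    AddChar.sum_mulShift _ (isPrimitive_stdAddChar r), hcast]
  split_ifs <;> simp

theorem expect_norm_sq_sum_mul_stdAddChar_pow {d : ℕ} (hd : d ≤ r) (c : ℕ → ℂ) :
    𝔼 j : ZMod r, ‖∑ l ∈ range d, c l * stdAddChar j ^ l‖ ^ 2 = ∑ l ∈ range d, ‖c l‖ ^ 2 := by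
  apply Complex.ofReal_injective
  push_cast
  simp only [← Complex.mul_conj', map_sum, sum_mul_sum, map_mul]
  calc 𝔼 j : ZMod r, ∑ k ∈ range d, ∑ l ∈ range d,
        c k * stdAddChar j ^ k * (starRingEnd ℂ (c l) * starRingEnd ℂ (stdAddChar j ^ l))
      = ∑ k ∈ range d, ∑ l ∈ range d, c k * starRingEnd ℂ (c l) *
          𝔼 j : ZMod r, stdAddChar j ^ k * starRingEnd ℂ (stdAddChar j ^ l) := by
        simp only [expect_sum_comm, mul_expect, mul_mul_mul_comm]
    _ = ∑ k ∈ range d, c k * starRingEnd ℂ (c k) := by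
        refine sum_congr rfl fun k hk => ?_
        have hterm (l : ℕ) (hl : l ∈ range d) := expect_stdAddChar_pow_mul_conj_pow (r := r)
          ((mem_range.mp hk).trans_le hd) ((mem_range.mp hl).trans_le hd)
        rw [sum_congr rfl fun l hl => by rw [hterm l hl, mul_ite, mul_one, mul_zero],
          sum_ite_eq, if_pos hk]

theorem expect_norm_mul_stdAddChar_add_pow {k : ℕ} (hk : k < r) (a b : ℂ) :
    𝔼 j : ZMod r, ‖a * stdAddChar j + b‖ ^ (2 * k) =
      ∑ l ∈ range (k + 1), (k.choose l : ℝ) ^ 2 * ‖a‖ ^ (2 * l) * ‖b‖ ^ (2 * (k - l)) := by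
  have hbinom (j : ZMod r) : ‖a * stdAddChar j + b‖ ^ (2 * k) =
      ‖∑ l ∈ range (k + 1), a ^ l * b ^ (k - l) * k.choose l * stdAddChar j ^ l‖ ^ 2 := by
    rw [mul_comm 2, pow_mul, ← norm_pow, add_pow]
    congr! 3 with l
    ring
  simp only [hbinom, expect_norm_sq_sum_mul_stdAddChar_pow hk]
  refine sum_congr rfl fun l _ => ?_
  simp only [norm_mul, norm_pow, Complex.norm_natCast]
  ring

variable {ι : Type*} [DecidableEq ι] [Fintype ι]

/-- The moment of order `2 * k` of the random sum `∑ i ∈ s, a i * ζ i`, where the `ζ i` are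
independent uniform `r`-th roots of unity. -/
noncomputable def phaseMoment (r : ℕ) [NeZero r] (a : ι → ℂ) (s : Finset ι) (k : ℕ) : ℝ :=
  𝔼 ω : ι → ZMod r, ‖∑ i ∈ s, a i * stdAddChar (ω i)‖ ^ (2 * k)

theorem phaseMoment_zero (a : ι → ℂ) (s : Finset ι) : phaseMoment r a s 0 = 1 := by
  simp [phaseMoment]

theorem phaseMoment_empty (a : ι → ℂ) {k : ℕ} (hk : k ≠ 0) : phaseMoment r a ∅ k = 0 := by
  simp [phaseMoment, hk]

theorem phaseMoment_insert {k : ℕ} (hk : k < r) (a : ι → ℂ) {s : Finset ι} {i : ι} (hi : i ∉ s) :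
    phaseMoment r a (insert i s) k =
      ∑ l ∈ range (k + 1), (k.choose l : ℝ) ^ 2 * ‖a i‖ ^ (2 * l) * phaseMoment r a s (k - l) := by
  -- Rotating the single phase `ζ i` by `j` does not change the law, so one may average over `j`.
  have hshift (j : ZMod r) : phaseMoment r a (insert i s) k =
      𝔼 ω : ι → ZMod r, ‖a i * stdAddChar (ω i) * stdAddChar j +
        ∑ l ∈ s, a l * stdAddChar (ω l)‖ ^ (2 * k) := by
    refine Fintype.expect_equiv (Equiv.subRight (Pi.single i j)) _ _ fun (ω : ι → ZMod r) => ?_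
    have hs : ∑ l ∈ s, a l * stdAddChar ((ω - Pi.single i j : ι → ZMod r) l) =
        ∑ l ∈ s, a l * stdAddChar (ω l) := by
      refine sum_congr rfl fun l hl => ?_
      rw [Pi.sub_apply, Pi.single_eq_of_ne (ne_of_mem_of_not_mem hl hi), sub_zero]
    rw [sum_insert hi, Equiv.subRight_apply, hs, mul_assoc, ← AddChar.map_add_eq_mul, Pi.sub_apply,
      Pi.single_eq_same, sub_add_cancel]
  calc phaseMoment r a (insert i s) k
      = 𝔼 _j : ZMod r, phaseMoment r a (insert i s) k := (Fintype.expect_const _).symm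
    _ = 𝔼 ω : ι → ZMod r, 𝔼 j : ZMod r, ‖a i * stdAddChar (ω i) * stdAddChar j +
          ∑ l ∈ s, a l * stdAddChar (ω l)‖ ^ (2 * k) := by
        rw [expect_congr rfl fun j _ => hshift j, expect_comm]
    _ = _ := by
        simp only [expect_norm_mul_stdAddChar_add_pow hk, norm_mul, AddChar.norm_apply, mul_one,
          expect_sum_comm, ← mul_expect, phaseMoment]

variable (a : ι → ℂ) (s : Finset ι)

theorem phaseMoment_one (hr : 1 < r) : phaseMoment r a s 1 = ∑ i ∈ s, ‖a i‖ ^ 2 := by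
  induction s using Finset.induction with
  | empty => exact phaseMoment_empty a one_ne_zero
  | insert i s hi ih =>
    rw [phaseMoment_insert hr a hi]
    simp only [sum_range_succ, sum_range_zero, sum_insert hi]
    norm_num [ih, phaseMoment_zero]
    ring

theorem phaseMoment_two (hr : 2 < r) :
    phaseMoment r a s 2 = 2 * (∑ i ∈ s, ‖a i‖ ^ 2) ^ 2 - ∑ i ∈ s, ‖a i‖ ^ 4 := by
  induction s using Finset.induction with
  | empty => norm_num [phaseMoment_empty]
  | insert i s hi ih =>
    rw [phaseMoment_insert hr a hi]
    simp only [sum_range_succ, sum_range_zero, sum_insert hi]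
    norm_num [ih, phaseMoment_zero, phaseMoment_one a s (r := r) (by omega)]
    ring

theorem phaseMoment_three (hr : 3 < r) :
    phaseMoment r a s 3 = 6 * (∑ i ∈ s, ‖a i‖ ^ 2) ^ 3
      - 9 * (∑ i ∈ s, ‖a i‖ ^ 2) * (∑ i ∈ s, ‖a i‖ ^ 4) + 4 * ∑ i ∈ s, ‖a i‖ ^ 6 := by
  induction s using Finset.induction with
  | empty => norm_num [phaseMoment_empty]
  | insert i s hi ih =>
    rw [phaseMoment_insert hr a hi]
    simp only [sum_range_succ, sum_range_zero, sum_insert hi]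
    norm_num [ih, phaseMoment_zero, phaseMoment_one a s (r := r) (by omega),
      phaseMoment_two a s (r := r) (by omega), Nat.choose]
    ring

theorem phaseMoment_four (hr : 4 < r) :
    phaseMoment r a s 4 = 24 * (∑ i ∈ s, ‖a i‖ ^ 2) ^ 4
      - 72 * (∑ i ∈ s, ‖a i‖ ^ 2) ^ 2 * (∑ i ∈ s, ‖a i‖ ^ 4) + 18 * (∑ i ∈ s, ‖a i‖ ^ 4) ^ 2
      + 64 * (∑ i ∈ s, ‖a i‖ ^ 2) * (∑ i ∈ s, ‖a i‖ ^ 6) - 33 * ∑ i ∈ s, ‖a i‖ ^ 8 := by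
  induction s using Finset.induction with
  | empty => norm_num [phaseMoment_empty]
  | insert i s hi ih =>
    rw [phaseMoment_insert hr a hi]
    simp only [sum_range_succ, sum_range_zero, sum_insert hi]
    norm_num [ih, phaseMoment_zero, phaseMoment_one a s (r := r) (by omega),
      phaseMoment_two a s (r := r) (by omega), phaseMoment_three a s (r := r) (by omega),
      Nat.choose]
    ring

end Moments

section Khinchine

open ZMod

variable {ι : Type*} [DecidableEq ι] [Fintype ι] {r : ℕ} [NeZero r]

theorem expect_mul_logMajorant_le (hr : 4 < r) {a : ι → ℂ} (ha : ∑ i, ‖a i‖ ^ 2 = 1) :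
    𝔼 ω : ι → ZMod r, ‖∑ i, a i * stdAddChar (ω i)‖ ^ 2 *
      logMajorant (‖∑ i, a i * stdAddChar (ω i)‖ ^ 2) ≤ 0.54 := by
  have hmoments : 𝔼 ω : ι → ZMod r, ‖∑ i, a i * stdAddChar (ω i)‖ ^ 2 *
      logMajorant (‖∑ i, a i * stdAddChar (ω i)‖ ^ 2) =
      -1.32 * phaseMoment r a univ 1 + 155 / 92 * phaseMoment r a univ 2 -
        73 / 184 * phaseMoment r a univ 3 + 5 / 138 * phaseMoment r a univ 4 := by
    simp only [phaseMoment, mul_expect, ← expect_add_distrib, ← expect_sub_distrib, logMajorant]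
    exact expect_congr rfl fun ω _ => by ring
  have hcauchy : (∑ i, ‖a i‖ ^ 4) ^ 2 ≤ ∑ i, ‖a i‖ ^ 6 := by
    calc (∑ i, ‖a i‖ ^ 4) ^ 2 ≤ (∑ i, ‖a i‖ ^ 2) * ∑ i, ‖a i‖ ^ 6 :=
          sum_sq_le_sum_mul_sum_of_sq_le_mul univ (fun i _ => by positivity)
            (fun i _ => by positivity) (fun i _ => le_of_eq (by ring))
      _ = ∑ i, ‖a i‖ ^ 6 := by rw [ha, one_mul]
  have hresidual : 0 ≤ 133 / 184 * ∑ i, ‖a i‖ ^ 4 - 191 / 138 * ∑ i, ‖a i‖ ^ 6 +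
      55 / 46 * ∑ i, ‖a i‖ ^ 8 := by
    simp only [mul_sum, ← sum_add_distrib, ← sum_sub_distrib]
    refine sum_nonneg fun i _ => ?_
    have hquadratic : 0 ≤ 133 / 184 - 191 / 138 * ‖a i‖ ^ 2 + 55 / 46 * (‖a i‖ ^ 2) ^ 2 := by
      nlinarith [sq_nonneg (‖a i‖ ^ 2 - 0.58)]
    calc 0 ≤ ‖a i‖ ^ 4 * (133 / 184 - 191 / 138 * ‖a i‖ ^ 2 + 55 / 46 * (‖a i‖ ^ 2) ^ 2) := by
          positivity
      _ = _ := by ring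
  rw [hmoments, phaseMoment_one a univ (by omega), phaseMoment_two a univ (by omega),
    phaseMoment_three a univ (by omega), phaseMoment_four a univ (by omega), ha]
  linarith

theorem exp_le_expect_norm_sq_rpow (hr : 4 < r) {a : ι → ℂ} (ha : ∑ i, ‖a i‖ ^ 2 = 1) {p : ℝ}
    (hp : p ≤ 1) :
    exp (0.54 * (p - 1)) ≤ 𝔼 ω : ι → ZMod r, (‖∑ i, a i * stdAddChar (ω i)‖ ^ 2) ^ p := by
  set X : (ι → ZMod r) → ℝ := fun ω => ‖∑ i, a i * stdAddChar (ω i)‖ ^ 2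
  have hX (ω) : 0 ≤ X ω := sq_nonneg _
  have hmean : 𝔼 ω, X ω = 1 := (phaseMoment_one a univ (by omega)).trans ha
  have hentropy : 𝔼 ω, X ω * log (X ω) ≤ 0.54 := by
    refine (expect_le_expect fun ω _ => ?_).trans (expect_mul_logMajorant_le hr ha)
    rcases (hX ω).eq_or_lt with h0 | hpos
    · change X ω * log (X ω) ≤ X ω * logMajorant (X ω)
      simp only [← h0, zero_mul, le_refl]
    · exact mul_le_mul_of_nonneg_left (log_le_logMajorant hpos) hpos.le
  calc exp (0.54 * (p - 1)) ≤ exp ((p - 1) * 𝔼 ω, X ω * log (X ω)) := by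
        rw [exp_le_exp, mul_comm]
        exact mul_le_mul_of_nonpos_left hentropy (by linarith)
    _ ≤ 𝔼 ω, X ω ^ p := exp_mul_entropy_le_expect_rpow hX hmean p

theorem rpow_sum_norm_sq_le_exp_mul_expect (hr : 4 < r) (a : ι → ℂ) {p : ℝ} (hp₀ : 0 < p)
    (hp₁ : p ≤ 1) :
    (∑ i, ‖a i‖ ^ 2) ^ p ≤
      exp (0.54 * (1 - p)) * 𝔼 ω : ι → ZMod r, (‖∑ i, a i * stdAddChar (ω i)‖ ^ 2) ^ p := by
  obtain ⟨T, hT⟩ : ∃ T, ∑ i, ‖a i‖ ^ 2 = T := ⟨_, rfl⟩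
  rw [hT]
  rcases (hT ▸ sum_nonneg fun i _ => sq_nonneg ‖a i‖ : 0 ≤ T).eq_or_lt with h0 | hpos
  · rw [← h0, zero_rpow hp₀.ne']
    positivity
  have hsqrt : ‖(√T : ℂ)‖ ^ 2 = T := by simp [sq_sqrt hpos.le]
  have hsqrt0 : (√T : ℂ) ≠ 0 := by simpa using (sqrt_pos.mpr hpos).ne'
  have hnormalised : ∑ i, ‖a i / √T‖ ^ 2 = 1 := by
    simp only [norm_div, div_pow, hsqrt, ← sum_div, hT, div_self hpos.ne']
  have hscale (ω : ι → ZMod r) : ‖∑ i, a i * stdAddChar (ω i)‖ ^ 2 =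
      T * ‖∑ i, a i / √T * stdAddChar (ω i)‖ ^ 2 := by
    nth_rw 1 [← hsqrt]
    rw [← mul_pow, ← norm_mul, mul_sum]
    simp only [← mul_assoc, mul_div_cancel₀ _ hsqrt0]
  calc T ^ p = exp (0.54 * (1 - p)) * (T ^ p * exp (0.54 * (p - 1))) := by
        rw [mul_left_comm, ← exp_add, ← mul_add]
        simp
    _ ≤ exp (0.54 * (1 - p)) * (T ^ p *
          𝔼 ω : ι → ZMod r, (‖∑ i, a i / √T * stdAddChar (ω i)‖ ^ 2) ^ p) := by
        gcongr
        exact exp_le_expect_norm_sq_rpow hr hnormalised hp₁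
    _ = _ := by simp only [hscale, mul_rpow hpos.le (sq_nonneg _), mul_expect]

end Khinchine

section MixedNorms

variable {ι κ : Type*} [Fintype ι] [Fintype κ]

theorem sum_prod_rpow_le_prod_sum_rpow (f : ι → κ → ℝ≥0)
    {w : ι → ℝ} (hw : ∀ i, 0 ≤ w i) (hsum : ∑ i, w i = 1) :
    ∑ x, ∏ i, f i x ^ w i ≤ ∏ i, (∑ x, f i x) ^ w i := by
  let _ : MeasurableSpace κ := ⊤
  have hholder := ENNReal.lintegral_prod_norm_pow_le (μ := MeasureTheory.Measure.count) univ
    (f := fun i x => (f i x : ENNReal)) (fun i _ => (measurable_of_finite _).aemeasurable)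
    hsum (fun i _ => hw i)
  simp only [MeasureTheory.lintegral_count, tsum_fintype, ← ENNReal.coe_rpow_of_nonneg _ (hw _),
    ← ENNReal.ofNNReal_finsetProd, ← ENNReal.ofNNReal_finsetSum] at hholder
  exact_mod_cast hholder

theorem sum_rpow_le_sum_prod_rpow_mul_prod_sum_rpow [Nonempty ι] (a : κ → ℝ≥0) (s : ι → κ → ℝ≥0)
    (hs : ∀ i x, s i x = 0 → a x = 0) :
    ∑ x, a x ^ (2 * Fintype.card ι / (Fintype.card ι + 1) : ℝ) ≤
      (∑ x, ∏ i, s i x ^ (Fintype.card ι : ℝ)⁻¹) ^ (Fintype.card ι + 1 : ℝ)⁻¹ *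
        ∏ i, (∑ x, a x ^ 2 * s i x ^ (-(Fintype.card ι : ℝ)⁻¹)) ^
          (Fintype.card ι + 1 : ℝ)⁻¹ := by
  set d := Fintype.card ι with hd
  have : 0 < (d : ℝ) := by exact_mod_cast Fintype.card_pos
  -- Hölder with `d + 1` factors: the weights `s i` cancel in the product over `Option ι`.
  let f : Option ι → κ → ℝ≥0 := fun o x =>
    o.elim (∏ i, s i x ^ (d : ℝ)⁻¹) fun i => a x ^ 2 * s i x ^ (-(d : ℝ)⁻¹)
  have hpointwise (x) : a x ^ (2 * d / (d + 1) : ℝ) ≤ ∏ o, f o x ^ (d + 1 : ℝ)⁻¹ := by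
    rcases eq_or_ne (a x) 0 with h0 | h0
    · rw [h0, NNReal.zero_rpow (by positivity)]
      exact zero_le
    have hcancel (i) : s i x ^ (d : ℝ)⁻¹ * (a x ^ 2 * s i x ^ (-(d : ℝ)⁻¹)) = a x ^ 2 := by
      rw [mul_left_comm, ← NNReal.rpow_add (mt (hs i x) h0), add_neg_cancel, NNReal.rpow_zero,
        mul_one]
    have hprod : ∏ o, f o x = a x ^ (2 * d) := by
      simp only [Fintype.prod_option, f, Option.elim_none, Option.elim_some, ← prod_mul_distrib,
        hcancel, prod_const, card_univ, ← hd, pow_mul]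
    rw [NNReal.finsetProd_rpow, hprod, ← NNReal.rpow_natCast_mul]
    push_cast
    rfl
  calc ∑ x, a x ^ (2 * d / (d + 1) : ℝ)
      ≤ ∑ x, ∏ o, f o x ^ (d + 1 : ℝ)⁻¹ := sum_le_sum fun x _ => hpointwise x
    _ ≤ ∏ o, (∑ x, f o x) ^ (d + 1 : ℝ)⁻¹ := by
        refine sum_prod_rpow_le_prod_sum_rpow f (fun _ => by positivity) ?_
        rw [sum_const, card_univ, Fintype.card_option, ← hd, nsmul_eq_mul, Nat.cast_succ,
          mul_inv_cancel₀ (by positivity)]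
    _ = _ := Fintype.prod_option _

theorem sum_rpow_mul_rpow_le_rpow_sum_mul_rpow_sum (f g : κ → ℝ≥0) {v w : ℝ} (hv : 0 ≤ v)
    (hw : 0 ≤ w) (hvw : v + w = 1) :
    ∑ x, f x ^ v * g x ^ w ≤ (∑ x, f x) ^ v * (∑ x, g x) ^ w := by
  simpa [Fin.prod_univ_two] using sum_prod_rpow_le_prod_sum_rpow ![f, g] (w := ![v, w])
    (Fin.forall_fin_two.mpr ⟨hv, hw⟩) (by simpa [Fin.sum_univ_two] using hvw)

variable {A : Type*} {m : ℕ}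

theorem removeNth_succ_cons (k : Fin (m + 1)) (a : A) (y : Fin (m + 1) → A) :
    k.succ.removeNth (Fin.cons a y : Fin (m + 2) → A) = Fin.cons a (k.removeNth y) :=
  Fin.cons_comp_succ_succAbove _ _ _

variable [Fintype A]

theorem sum_pi_eq_sum_sum_insertNth {M : Type*} [AddCommMonoid M] (k : Fin (m + 1))
    (F : (Fin (m + 1) → A) → M) :
    ∑ x, F x = ∑ y : Fin m → A, ∑ a, F (k.insertNth a y) := by
  rw [← (Fin.insertNthEquiv (fun _ => A) k).sum_comp, Fintype.sum_prod_type_right]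
  rfl

theorem sum_pi_eq_sum_sum_cons {M : Type*} [AddCommMonoid M] (F : (Fin (m + 1) → A) → M) :
    ∑ x, F x = ∑ a, ∑ y : Fin m → A, F (Fin.cons a y) := by
  rw [sum_pi_eq_sum_sum_insertNth 0, sum_comm]
  simp only [Fin.insertNth_zero']

theorem sum_prod_removeNth_fin_two {R : Type*} [CommSemiring R] (h : Fin 2 → (Fin 1 → A) → R) :
    ∑ x : Fin 2 → A, ∏ k, h k (k.removeNth x) = ∏ k, ∑ y, h k y := by
  have hremove (a : A) (y : Fin 1 → A) :
      Fin.removeNth 1 (Fin.cons a y : Fin 2 → A) = Fin.cons a default := by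
    rw [← Fin.succ_zero_eq_one, removeNth_succ_cons]
    exact congrArg _ (Subsingleton.elim _ _)
  calc ∑ x : Fin 2 → A, ∏ k, h k (k.removeNth x)
      = ∑ a, ∑ y, h 0 y * h 1 (Fin.cons a default) := by
        simp only [sum_pi_eq_sum_sum_cons (m := 1), Fin.prod_univ_two, Fin.removeNth_zero,
          Fin.tail_cons, hremove]
    _ = (∑ y, h 0 y) * ∑ a, h 1 (Fin.cons a default) := by
        simp only [← sum_mul, ← mul_sum]
    _ = ∏ k, ∑ y, h k y := by
        rw [Fin.prod_univ_two, sum_pi_eq_sum_sum_cons (h 1)]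
        simp only [Fintype.sum_unique]

theorem sum_prod_removeNth_rpow_le_prod_sum_rpow (hm : 1 ≤ m)
    (h : Fin (m + 1) → (Fin m → A) → ℝ≥0) :
    ∑ x : Fin (m + 1) → A, ∏ k, h k (k.removeNth x) ^ (m : ℝ)⁻¹ ≤
      ∏ k, (∑ y, h k y) ^ (m : ℝ)⁻¹ := by
  induction m, hm using Nat.le_induction with
  | base =>
    simp only [Nat.cast_one, inv_one, NNReal.rpow_one]
    exact (sum_prod_removeNth_fin_two h).le
  | succ m hm ih =>
    set t : ℝ := ((m + 1 : ℕ) : ℝ)⁻¹ with ht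
    have ht₀ : 0 ≤ t := by positivity
    have hmt : (m : ℝ)⁻¹ * (m * t) = t := inv_mul_cancel_left₀ (by positivity) t
    have hsum : t + m * t = 1 := by
      rw [← one_add_mul, ht, Nat.cast_succ, add_comm, mul_inv_cancel₀ (by positivity)]
    have hslice (a : A) :
        ∑ y, h 0 y ^ t * ∏ k : Fin (m + 1), h k.succ (Fin.cons a (k.removeNth y)) ^ t ≤
        (∑ y, h 0 y) ^ t * ∏ k : Fin (m + 1), (∑ z, h k.succ (Fin.cons a z)) ^ t := by
      have hholder := sum_rpow_mul_rpow_le_rpow_sum_mul_rpow_sum (h 0)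
        (fun y => ∏ k : Fin (m + 1), h k.succ (Fin.cons a (k.removeNth y)) ^ (m : ℝ)⁻¹) ht₀
        (mul_nonneg m.cast_nonneg ht₀) hsum
      have hslices := NNReal.rpow_le_rpow (ih fun k z => h k.succ (Fin.cons a z))
        (mul_nonneg m.cast_nonneg ht₀)
      simp only [← NNReal.finsetProd_rpow, ← NNReal.rpow_mul, hmt] at hholder hslices
      exact hholder.trans (mul_le_mul_right hslices _)
    calc ∑ x : Fin (m + 2) → A, ∏ k, h k (k.removeNth x) ^ t
        = ∑ a, ∑ y, h 0 y ^ t * ∏ k : Fin (m + 1), h k.succ (Fin.cons a (k.removeNth y)) ^ t := by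
          simp only [sum_pi_eq_sum_sum_cons, Fin.prod_univ_succ (n := m + 1), Fin.removeNth_zero,
            Fin.tail_cons, removeNth_succ_cons]
      _ ≤ ∑ a, (∑ y, h 0 y) ^ t * ∏ k : Fin (m + 1), (∑ z, h k.succ (Fin.cons a z)) ^ t :=
          sum_le_sum fun a _ => hslice a
      _ ≤ (∑ y, h 0 y) ^ t * ∏ k : Fin (m + 1), (∑ a, ∑ z, h k.succ (Fin.cons a z)) ^ t := by
          rw [← mul_sum]
          gcongr
          refine sum_prod_rpow_le_prod_sum_rpow _ (fun _ => ht₀) ?_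
          rw [sum_const, card_univ, Fintype.card_fin, nsmul_eq_mul, ht,
            mul_inv_cancel₀ (by positivity)]
      _ = ∏ k, (∑ y, h k y) ^ t := by
          simp only [Fin.prod_univ_succ (n := m + 1), ← sum_pi_eq_sum_sum_cons]

theorem sum_rpow_le_prod_sum_insertNth_rpow (hm : 1 ≤ m) (a : (Fin (m + 1) → A) → ℝ≥0) :
    ∑ x, a x ^ (2 * (m + 1) / (m + 2) : ℝ) ≤
      ∏ k : Fin (m + 1), (∑ y : Fin m → A, (∑ j, a (k.insertNth j y) ^ 2) ^ (m / (m + 1) : ℝ)) ^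
        ((m + 1) / (m * (m + 2)) : ℝ) := by
  set S : Fin (m + 1) → (Fin m → A) → ℝ≥0 := fun k y => ∑ j, a (k.insertNth j y) ^ 2
  set R : Fin (m + 1) → ℝ≥0 := fun k => ∑ y, S k y ^ (m / (m + 1) : ℝ)
  have hS (k) (x : Fin (m + 1) → A) (h0 : S k (k.removeNth x) = 0) : a x = 0 := by
    have := (sum_eq_zero_iff_of_nonneg fun _ _ => zero_le).mp h0 (x k) (mem_univ _)
    simpa using this
  have hgeom : ∑ x : Fin (m + 1) → A, ∏ k, S k (k.removeNth x) ^ (m + 1 : ℝ)⁻¹ ≤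
      ∏ k, R k ^ (m : ℝ)⁻¹ := by
    refine le_of_eq_of_le ?_ (sum_prod_removeNth_rpow_le_prod_sum_rpow hm
      fun k y => S k y ^ (m / (m + 1) : ℝ))
    simp only [← NNReal.rpow_mul]
    field_simp
  have hline (k) : ∑ x : Fin (m + 1) → A,
      a x ^ 2 * S k (k.removeNth x) ^ (-(m + 1 : ℝ)⁻¹) = R k := by
    rw [sum_pi_eq_sum_sum_insertNth k]
    refine sum_congr rfl fun y _ => ?_
    have hexp : (m / (m + 1) : ℝ) = 1 + -(m + 1 : ℝ)⁻¹ := by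
      field_simp
      ring
    simp only [Fin.removeNth_insertNth, ← sum_mul]
    rw [hexp, NNReal.rpow_add' (by rw [← hexp]; positivity), NNReal.rpow_one]
  have hinterp := sum_rpow_le_sum_prod_rpow_mul_prod_sum_rpow a
    (fun k (x : Fin (m + 1) → A) => S k (k.removeNth x)) hS
  rw [Fintype.card_fin] at hinterp
  push_cast at hinterp
  rw [add_assoc, one_add_one_eq_two] at hinterp
  simp only [hline] at hinterp
  calc ∑ x, a x ^ (2 * (m + 1) / (m + 2) : ℝ)
      ≤ (∏ k, R k ^ (m : ℝ)⁻¹) ^ (m + 2 : ℝ)⁻¹ * ∏ k, R k ^ (m + 2 : ℝ)⁻¹ := by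
        refine hinterp.trans ?_
        gcongr
    _ = ∏ k, R k ^ ((m + 1) / (m * (m + 2)) : ℝ) := by
        rw [← NNReal.finsetProd_rpow, ← prod_mul_distrib]
        refine prod_congr rfl fun k _ => ?_
        rw [← NNReal.rpow_mul, ← NNReal.rpow_add' (by positivity)]
        congr 1
        field_simp
        ring

end MixedNorms

section Multilinear

/-- `C` is an admissible constant in the Bohnenblust–Hille inequality for complex `n`-linear forms
on `ι → ℂ`. -/
def IsBHConst (n : ℕ) (ι : Type*) [Fintype ι] [DecidableEq ι] (C : ℝ) : Prop :=
  ∀ U : ContinuousMultilinearMap ℂ (fun _ : Fin n => (ι → ℂ)) ℂ,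
    (∑ i : Fin n → ι, ‖U (fun k => Pi.single (i k) 1)‖ ^ (2 * n / (n + 1) : ℝ)) ^
      ((n + 1) / (2 * n) : ℝ) ≤ C * ‖U‖

variable {ι : Type*} [Fintype ι] [DecidableEq ι] {n : ℕ} {C : ℝ}

theorem isBHConst_iff_sum_rpow_le (hn : n ≠ 0) (hC : 0 ≤ C) :
    IsBHConst n ι C ↔ ∀ U : ContinuousMultilinearMap ℂ (fun _ : Fin n => (ι → ℂ)) ℂ,
      ∑ i : Fin n → ι, ‖U (fun k => Pi.single (i k) 1)‖ ^ (2 * n / (n + 1) : ℝ) ≤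
        (C * ‖U‖) ^ (2 * n / (n + 1) : ℝ) := by
  refine forall_congr' fun U => ?_
  rw [← inv_div (2 * n : ℝ), rpow_inv_le_iff_of_pos (by positivity) (by positivity) (by positivity)]

theorem apply_eq_sum_smul_apply_single {R E F : Type*} [Semiring R] [AddCommMonoid E] [Module R E]
    [FunLike F (ι → R) E] [LinearMapClass F R (ι → R) E] (f : F) (z : ι → R) :
    f z = ∑ j, z j • f (Pi.single j 1) := by
  conv_lhs => rw [pi_eq_sum_univ' z]
  simp only [map_sum, map_smul]

theorem sum_norm_apply_single_le_norm {𝕜 : Type*} [RCLike 𝕜] (f : (ι → 𝕜) →L[𝕜] 𝕜) :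
    ∑ j, ‖f (Pi.single j 1)‖ ≤ ‖f‖ := by
  choose z hz hphase using fun j => RCLike.exists_norm_eq_mul_self (f (Pi.single j 1))
  have hz1 : ‖z‖ ≤ 1 := (pi_norm_le_iff_of_nonneg zero_le_one).mpr fun j => (hz j).le
  calc ∑ j, ‖f (Pi.single j 1)‖ = ‖f z‖ := by
        rw [apply_eq_sum_smul_apply_single f z]
        simp only [smul_eq_mul, ← hphase, ← RCLike.ofReal_sum]
        exact (RCLike.norm_of_nonneg (sum_nonneg fun _ _ => norm_nonneg _)).symm
    _ ≤ ‖f‖ := f.unit_le_opNorm z hz1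

theorem isBHConst_one : IsBHConst 1 ι 1 := by
  rw [isBHConst_iff_sum_rpow_le one_ne_zero zero_le_one]
  intro U
  obtain ⟨f, rfl⟩ :=
    (ContinuousMultilinearMap.ofSubsingletonₗᵢ (G' := ℂ) ℂ (ι → ℂ) (0 : Fin 1)).surjective U
  rw [← (Equiv.funUnique (Fin 1) ι).symm.sum_comp]
  simpa [one_add_one_eq_two] using sum_norm_apply_single_le_norm f

theorem curryMid_apply_single {𝕜 G : Type*} [NontriviallyNormedField 𝕜] [NormedAddCommGroup G]
    [NormedSpace 𝕜 G] (U : ContinuousMultilinearMap 𝕜 (fun _ : Fin (n + 1) => (ι → 𝕜)) G)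
    (k : Fin (n + 1)) (j : ι) (y : Fin n → ι) :
    U.curryMid k (Pi.single j 1) (fun l => Pi.single (y l) 1) =
      U fun l => Pi.single (k.insertNth (α := fun _ => ι) j y l) 1 := by
  rw [U.curryMid_apply]
  congr 1
  refine Fin.insertNth_eq_iff.mpr ⟨?_, ?_⟩
  · simp
  · ext l : 1
    simp [Fin.removeNth]

theorem IsBHConst.sum_rpow_sum_insertNth_le (hn : n ≠ 0) (hC : 0 ≤ C) (h : IsBHConst n ι C)
    (U : ContinuousMultilinearMap ℂ (fun _ : Fin (n + 1) => (ι → ℂ)) ℂ) (k : Fin (n + 1)) :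
    ∑ y : Fin n → ι, (∑ j, ‖U fun l => Pi.single (k.insertNth (α := fun _ => ι) j y l) 1‖ ^ 2) ^
      (n / (n + 1) : ℝ) ≤ exp (0.54 / (n + 1)) * (C * ‖U‖) ^ (2 * n / (n + 1) : ℝ) := by
  let Z (ω : ι → ZMod 5) : ι → ℂ := fun j => ZMod.stdAddChar (ω j)
  let E (y : Fin n → ι) : Fin n → ι → ℂ := fun l => Pi.single (y l) 1
  have hnorm (ω) : ‖U.curryMid k (Z ω)‖ ≤ ‖U‖ := by
    rw [← U.norm_curryMid k]
    refine (U.curryMid k).unit_le_opNorm _ ?_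
    exact (pi_norm_le_iff_of_nonneg zero_le_one).mpr fun j => (AddChar.norm_apply _ _).le
  have hexpand (ω y) : ∑ j, U.curryMid k (Pi.single j 1) (E y) * ZMod.stdAddChar (ω j) =
      U.curryMid k (Z ω) (E y) := by
    rw [apply_eq_sum_smul_apply_single _ (Z ω), _root_.sum_apply]
    simp only [_root_.smul_apply, smul_eq_mul, mul_comm, Z]
  have hkhinchine (y) : (∑ j, ‖U.curryMid k (Pi.single j 1) (E y)‖ ^ 2) ^ (n / (n + 1) : ℝ) ≤
      exp (0.54 / (n + 1)) * 𝔼 ω, ‖U.curryMid k (Z ω) (E y)‖ ^ (2 * n / (n + 1) : ℝ) := by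
    have hp : (n / (n + 1) : ℝ) ≤ 1 := div_le_one_of_le₀ (by linarith) (by positivity)
    have hle := rpow_sum_norm_sq_le_exp_mul_expect (r := 5) (by norm_num)
      (fun j => U.curryMid k (Pi.single j 1) (E y)) (by positivity) hp
    have hexp : 0.54 * (1 - n / (n + 1) : ℝ) = 0.54 / (n + 1) := by
      field_simp
      ring
    simpa only [hexpand, hexp, ← rpow_natCast_mul (norm_nonneg _), Nat.cast_ofNat,
      mul_div_assoc] using hle
  simp only [← curryMid_apply_single]
  calc ∑ y, (∑ j, ‖U.curryMid k (Pi.single j 1) (E y)‖ ^ 2) ^ (n / (n + 1) : ℝ)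
      ≤ ∑ y, exp (0.54 / (n + 1)) *
          𝔼 ω, ‖U.curryMid k (Z ω) (E y)‖ ^ (2 * n / (n + 1) : ℝ) :=
        sum_le_sum fun y _ => hkhinchine y
    _ = exp (0.54 / (n + 1)) *
          𝔼 ω, ∑ y, ‖U.curryMid k (Z ω) (E y)‖ ^ (2 * n / (n + 1) : ℝ) := by
        rw [← mul_sum, expect_sum_comm]
    _ ≤ exp (0.54 / (n + 1)) * (C * ‖U‖) ^ (2 * n / (n + 1) : ℝ) := by
        gcongr
        refine expect_le univ_nonempty fun ω _ => ?_
        refine ((isBHConst_iff_sum_rpow_le hn hC).mp h _).trans ?_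
        gcongr
        exact hnorm ω

theorem IsBHConst.succ (hn : n ≠ 0) (hC : 0 ≤ C) (h : IsBHConst n ι C) :
    IsBHConst (n + 1) ι (exp (0.27 / n) * C) := by
  rw [isBHConst_iff_sum_rpow_le n.succ_ne_zero (by positivity)]
  intro U
  set D := C * ‖U‖ with hD
  have hD₀ : 0 ≤ D := by positivity
  set B := exp (0.54 / (n + 1)) * D ^ (2 * n / (n + 1) : ℝ) with hB
  have hB₀ : 0 ≤ B := by positivity
  have hblei := NNReal.coe_le_coe.mpr <| sum_rpow_le_prod_sum_insertNth_rpow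
    (Nat.one_le_iff_ne_zero.mpr hn) fun i : Fin (n + 1) → ι => ‖U fun l => Pi.single (i l) 1‖₊
  push_cast at hblei ⊢
  rw [add_assoc (n : ℝ), one_add_one_eq_two]
  calc ∑ i : Fin (n + 1) → ι, ‖U fun l => Pi.single (i l) 1‖ ^ (2 * (n + 1) / (n + 2) : ℝ)
      ≤ _ := hblei
    _ ≤ ∏ _k : Fin (n + 1), B ^ ((n + 1) / (n * (n + 2)) : ℝ) := by
        gcongr with k
        exact h.sum_rpow_sum_insertNth_le hn hC U k
    _ = B ^ ((n + 1) ^ 2 / (n * (n + 2)) : ℝ) := by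
        rw [prod_const, card_univ, Fintype.card_fin, ← rpow_mul_natCast hB₀]
        push_cast
        ring_nf
    _ = (exp (0.27 / n) * C * ‖U‖) ^ (2 * (n + 1) / (n + 2) : ℝ) := by
        rw [hB, mul_assoc, ← hD, mul_rpow (by positivity) (by positivity),
          mul_rpow (by positivity) hD₀, ← rpow_mul hD₀, ← exp_mul, ← exp_mul]
        congr 2
        · field_simp
          norm_num
        · field_simp

end Multilinear

theorem exp_mul_harmonic_le_mul_rpow {M : ℕ} (hM : 2 ^ 12 ≤ M) :
    exp (0.27 * harmonic M) ≤ 0.99137409768 * (M : ℝ) ^ (0.304975 : ℝ) := by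
  have hM₀ : (0 : ℝ) < M := by exact_mod_cast (by positivity : 0 < 2 ^ 12).trans_le hM
  have hlogM : 8.3 ≤ log M := by
    calc (8.3 : ℝ) ≤ 12 * log 2 := by linarith [log_two_gt_d9]
      _ = log (2 ^ 12) := by rw [log_pow, Nat.cast_ofNat]
      _ ≤ log M := log_le_log (by positivity) (by exact_mod_cast hM)
  have hlogc : -0.009 ≤ log 0.99137409768 := by
    refine le_trans ?_ (one_sub_inv_le_log_of_pos (by norm_num))
    norm_num
  calc exp (0.27 * harmonic M)
      ≤ exp (log 0.99137409768 + log M * 0.304975) := by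
        rw [exp_le_exp]
        linarith [harmonic_le_one_add_log M]
    _ = 0.99137409768 * (M : ℝ) ^ (0.304975 : ℝ) := by
        rw [exp_add, exp_log (by norm_num), rpow_def_of_pos hM₀]

theorem stmt13_general (n : ℕ) (ι : Type*) [Fintype ι] [DecidableEq ι] :
    IsBHConst (n + 1) ι (exp (0.27 * harmonic n)) := by
  induction n with
  | zero => simpa using isBHConst_one
  | succ n ih =>
    convert ih.succ n.succ_ne_zero (exp_pos _).le using 1
    rw [← exp_add, harmonic_succ, Rat.cast_add, Rat.cast_inv, Rat.cast_natCast,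
      mul_add, div_eq_mul_inv, add_comm]

theorem stmt13 (n : ℕ) (hn : 2 ^ 14 < n) (N : ℕ) (hN : 0 < N)
    (U : ContinuousMultilinearMap ℂ (fun _ : Fin n => (Fin N → ℂ)) ℂ) :
    BHcomplex n N U ≤ 0.99137409768 * ((n : ℝ) - 1) ^ (0.304975 : ℝ) * ‖U‖ := by
  obtain ⟨m, rfl⟩ := Nat.exists_eq_succ_of_ne_zero (by omega : n ≠ 0)
  rw [Nat.cast_succ, add_sub_cancel_right]
  exact (stmt13_general m (Fin N) U).trans <|
    mul_le_mul_of_nonneg_right (exp_mul_harmonic_le_mul_rpow (by omega)) (norm_nonneg U)
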